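/- Let p be a prime and i, k natural numbers with 0 < i, 0 < k, p ∤ i and p ∤ k. Suppose b ∈ 𝔽_p((t)) and ε ∈ 𝔽_p((t)) is (the image of) a formal power series with zero constant coefficient (i.e. ε = 0 or v_t(ε) > 0), and suppose that t^{−i} − t^{−k} = b^p − b + ε holds in 𝔽_p((t)). Then i = k. -/

import Mathlib

theorem stmt6 (p : ℕ) [Fact p.Prime] (i k : ℕ) (hi : 0 < i) (hk : 0 < k)
    (hpi : ¬ p ∣ i) (hpk : ¬ p ∣ k)
    (b ε : LaurentSeries (ZMod p))
    (hε : ∃ e : PowerSeries (ZMod p),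
      ε = (e : LaurentSeries (ZMod p)) ∧ PowerSeries.constantCoeff e = 0)
    (heq : ((PowerSeries.X : PowerSeries (ZMod p)) : LaurentSeries (ZMod p)) ^ (-(i : ℤ)) -
        ((PowerSeries.X : PowerSeries (ZMod p)) : LaurentSeries (ZMod p)) ^ (-(k : ℤ)) =
      b ^ p - b + ε) :
    i = k := by
  by_contra hik
  have hp : p.Prime := Fact.out
  obtain ⟨e, rfl, -⟩ := hε
  rw [PowerSeries.coe_X, ← RatFunc.single_zpow, ← RatFunc.single_zpow] at heq
  have he : ∀ n : ℤ, n < 0 → (e : LaurentSeries (ZMod p)).coeff n = 0 := by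
    intro n hn
    rw [PowerSeries.coeff_coe, if_pos hn]
  have hc : ∀ n : ℤ, n < 0 → (if n = -(i : ℤ) then (1 : ZMod p) else 0) -
      (if n = -(k : ℤ) then (1 : ZMod p) else 0) = (b ^ p).coeff n - b.coeff n := by
    intro n hn
    have h := congrArg (fun x => HahnSeries.coeff x n) heq
    simp only [HahnSeries.coeff_sub, HahnSeries.coeff_add, HahnSeries.coeff_single, he n hn,
      add_zero] at h
    convert h
  have hord : (b ^ p).order = p * b.order := by
    rw [HahnSeries.order_pow, nsmul_eq_mul]
  have hp2 : (2 : ℤ) ≤ p := by exact_mod_cast hp.two_le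
  rcases le_or_gt 0 b.order with hb | hb
  · have h := hc (-(i : ℤ)) (by omega)
    have hb' : 0 ≤ (p : ℤ) * b.order := by positivity
    rw [if_pos rfl, if_neg (by omega), HahnSeries.coeff_eq_zero_of_lt_order (by omega),
      HahnSeries.coeff_eq_zero_of_lt_order (by omega)] at h
    simp at h
  · have hb0 : b ≠ 0 := by
      rintro rfl
      simp at hb
    have hlt : (p : ℤ) * b.order < b.order := by nlinarith
    have h := hc (p * b.order) (by omega)
    rw [if_neg, if_neg, HahnSeries.coeff_eq_zero_of_lt_order hlt, ← hord] at h
    · have h2 : (b ^ p).coeff (b ^ p).order ≠ 0 :=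
        HahnSeries.coeff_order_eq_zero.not.mpr (pow_ne_zero _ hb0)
      apply h2
      simpa using h.symm
    · intro h3
      apply hpk
      have : (p : ℤ) ∣ (k : ℤ) := ⟨-b.order, by linarith⟩
      exact_mod_cast this
    · intro h3
      apply hpi
      have : (p : ℤ) ∣ (i : ℤ) := ⟨-b.order, by linarith⟩
      exact_mod_cast this
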